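/- In any magma with a unary operation ' satisfying the identities x·(x'·x) = x and x·(x'·(y·(y'·((z·u)'·w')'))) = y·(y'·(x·(x'·((w·z)·u)))), the identity x'' = x holds. -/

import Mathlib

theorem inv_mul_inv_inv_eq_mul_mul {S : Type*} [Mul S] [Inv S]
    (hA : ∀ x : S, x * (x⁻¹ * x) = x)
    (hB : ∀ x y z u w : S,
      x * (x⁻¹ * (y * (y⁻¹ * ((z * u)⁻¹ * w⁻¹)⁻¹))) = y * (y⁻¹ * (x * (x⁻¹ * (w * z * u))))) :
    ∀ x y z : S, ((x * y)⁻¹ * z⁻¹)⁻¹ = z * x * y := by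
  have h1 : ∀ x y z u : S,
      ((x * y)⁻¹ * z⁻¹)⁻¹ * (((x * y)⁻¹ * z⁻¹)⁻¹⁻¹ * (u * (u⁻¹ * (z * x * y)))) =
      u * (u⁻¹ * ((x * y)⁻¹ * z⁻¹)⁻¹) := by
    intro x y z u
    rw [← hB u (((x * y)⁻¹ * z⁻¹)⁻¹) x y z, hA]
  have h2 : ∀ x y z : S,
      ((x * y)⁻¹ * z⁻¹)⁻¹ * (((x * y)⁻¹ * z⁻¹)⁻¹⁻¹ * (z * x * y)) =
      z * x * y * ((z * x * y)⁻¹ * ((x * y)⁻¹ * z⁻¹)⁻¹) := by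
    intro x y z
    simpa only [hA] using h1 x y z (z * x * y)
  intro x y z
  rw [← hA (((x * y)⁻¹ * z⁻¹)⁻¹), ← h1 x y z (((x * y)⁻¹ * z⁻¹)⁻¹), h2, hB, h2, hB, hA, hA]

theorem inv_inv_of_two_base {S : Type*} [Mul S] [Inv S]
    (hA : ∀ x : S, x * (x⁻¹ * x) = x)
    (hB : ∀ x y z u w : S,
      x * (x⁻¹ * (y * (y⁻¹ * ((z * u)⁻¹ * w⁻¹)⁻¹))) = y * (y⁻¹ * (x * (x⁻¹ * (w * z * u))))) :
    ∀ x : S, x⁻¹⁻¹ = x := by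
  have hK := inv_mul_inv_inv_eq_mul_mul hA hB
  have hC : ∀ x y z u w : S,
      x * (x⁻¹ * (y * (y⁻¹ * (z * u * w)))) = y * (y⁻¹ * (x * (x⁻¹ * (z * u * w)))) := by
    intro x y z u w
    rw [← hK u w z, hB x y u w z, hK]
  have h1 : ∀ x y : S, x * y * (y⁻¹ * y) = (y⁻¹ * x⁻¹)⁻¹ := by
    intro x y
    rw [← hK y (y⁻¹ * y) x, hA]
  have h2 : ∀ x y z u : S, (x * y * z * u⁻¹)⁻¹ = u * (y * z)⁻¹ * x⁻¹ := by
    intro x y z u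
    rw [← hK y z x, hK]
  have h3 : ∀ x : S, x * ((x⁻¹ * x)⁻¹ * (x⁻¹ * x)) = x * x⁻¹ * x := by
    intro x
    calc x * ((x⁻¹ * x)⁻¹ * (x⁻¹ * x))
      _ = x * (x⁻¹ * x) * ((x⁻¹ * x)⁻¹ * (x⁻¹ * x)) := by rw [hA x]
      _ = ((x⁻¹ * x)⁻¹ * x⁻¹)⁻¹ := by rw [h1 x (x⁻¹ * x)]
      _ = x * x⁻¹ * x := by rw [hK x⁻¹ x x]
  have h4 : ∀ x y z : S, x * (y * z) * (z⁻¹ * z) = ((z⁻¹ * y⁻¹)⁻¹⁻¹ * x⁻¹)⁻¹ := by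
    intro x y z
    rw [← hK (y * z) (z⁻¹ * z) x, h1]
  have h5 : ∀ x : S, ((x⁻¹ * x⁻¹⁻¹)⁻¹⁻¹ * x⁻¹)⁻¹ = x := by
    intro x
    rw [← h4 x x⁻¹ x, hA, hA]
  have h6 : ∀ x y : S, x * y * ((x * y)⁻¹ * x) * y = x * y := by
    intro x y
    rw [← hK ((x * y)⁻¹ * x) y (x * y), ← hK x y ((x * y)⁻¹), h5]
  have h7 : ∀ x : S, (x⁻¹ * x⁻¹⁻¹)⁻¹⁻¹ * x⁻¹ = ((x * x⁻¹)⁻¹⁻¹ * x)⁻¹ := by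
    intro x
    rw [← h5 ((x⁻¹ * x⁻¹⁻¹)⁻¹⁻¹ * x⁻¹), h5 x]
  have h8 : ∀ x : S, ((x * x⁻¹)⁻¹⁻¹ * x)⁻¹⁻¹ = x := by
    intro x
    rw [← h7 x, h5]
  have h9 : ∀ x y z : S, x * (y⁻¹ * y * z)⁻¹ * y⁻¹ = (y * z * x⁻¹)⁻¹ := by
    intro x y z
    rw [← h2 y (y⁻¹ * y) z x, hA]
  have h10 : ∀ x y z u w : S, ((x * y)⁻¹ * (z * u * w))⁻¹ = (u * w)⁻¹ * z⁻¹ * x * y := by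
    intro x y z u w
    rw [← hK u w z, hK]
  have h11 : ∀ x y z : S, ((x * x⁻¹)⁻¹⁻¹ * x)⁻¹ * y * z = ((y * z)⁻¹ * x)⁻¹ := by
    intro x y z
    rw [← hK y z (((x * x⁻¹)⁻¹⁻¹ * x)⁻¹), h8]
  have h12 : ∀ x y z : S, x * (y * z * ((y * z)⁻¹ * y)) * z = x * y * z := by
    intro x y z
    rw [← hK (y * z * ((y * z)⁻¹ * y)) z x, h6, hK]
  have h13 : ∀ x y : S, x * y * ((y⁻¹ * y)⁻¹ * (y⁻¹ * y)) = x * (y * y⁻¹) * y := by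
    intro x y
    rw [← hK y ((y⁻¹ * y)⁻¹ * (y⁻¹ * y)) x, h3, hK]
  have h14 : ∀ x : S, x⁻¹ * (x * x⁻¹) * x = x⁻¹ * x := by
    intro x
    rw [← h13 x⁻¹ x, hA]
  have h15 : ∀ x y : S, x * (y⁻¹ * (y * y⁻¹)) * y = x * y⁻¹ * y := by
    intro x y
    rw [← hK (y⁻¹ * (y * y⁻¹)) y x, h14, hK]
  have h16 : ∀ x : S, (x⁻¹ * (x⁻¹ * (x * x⁻¹))⁻¹)⁻¹ = (x⁻¹ * x⁻¹⁻¹)⁻¹ := by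
    intro x
    rw [← h1 (x⁻¹ * (x * x⁻¹)) x, h14, h1]
  have h17 : ∀ x y z : S, x * (y * (z⁻¹ * (z * z⁻¹))) * z = x * (y * z⁻¹) * z := by
    intro x y z
    rw [← hK (y * (z⁻¹ * (z * z⁻¹))) z x, h15, hK]
  have h18 : ∀ x y : S, x * y⁻¹ * (y⁻¹ * (y * y⁻¹))⁻¹ = x * y⁻¹ * y⁻¹⁻¹ := by
    intro x y
    rw [← hK y⁻¹ ((y⁻¹ * (y * y⁻¹))⁻¹) x, h16, hK]
  have h19 : ∀ x y : S, x * (x⁻¹ * ((y * x⁻¹)⁻¹ * y))⁻¹ * y⁻¹ = (y * x⁻¹)⁻¹ := by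
    intro x y
    rw [← h2 y x⁻¹ ((y * x⁻¹)⁻¹ * y) x, h6]
  have h20 : ∀ x y : S, (x * y⁻¹)⁻¹ * (x⁻¹ * (x * x⁻¹))⁻¹ = (x * y⁻¹)⁻¹ * x⁻¹⁻¹ := by
    intro x y
    rw [← h19 y x, h18, h19]
  have h21 : ∀ x y : S, (x * y)⁻¹ * (x⁻¹ * (x * x⁻¹))⁻¹ = (x * y)⁻¹ * x⁻¹⁻¹ := by
    intro x y
    rw [← h8 y, h20, h8]
  have h22 : ∀ x : S, x⁻¹ * (x⁻¹ * (x * x⁻¹))⁻¹ = x⁻¹ * x⁻¹⁻¹ := by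
    intro x
    calc x⁻¹ * (x⁻¹ * (x * x⁻¹))⁻¹
      _ = (x * (x⁻¹ * x))⁻¹ * (x⁻¹ * (x * x⁻¹))⁻¹ := by rw [hA x]
      _ = (x * (x⁻¹ * x))⁻¹ * x⁻¹⁻¹ := by rw [h21 x (x⁻¹ * x)]
      _ = x⁻¹ * x⁻¹⁻¹ := by rw [hA x]
  have h23 : ∀ x y z u : S, (x⁻¹ * x * y)⁻¹ * x⁻¹ * z * u = ((z * u)⁻¹ * (x * y))⁻¹ := by
    intro x y z u
    rw [← h10 z u x (x⁻¹ * x) y, hA]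
  have h24 : ∀ x y z u : S,
      x * (x⁻¹ * (y * (y⁻¹ * (z * u)))) = y * (y⁻¹ * (x * (x⁻¹ * (z * u)))) := by
    intro x y z u
    rw [← hA (z * u), ← hC y x z u ((z * u)⁻¹ * (z * u)), hA]
  have h25 : ∀ x y z : S, x * (x⁻¹ * (y * (y⁻¹ * z))) = y * (y⁻¹ * (x * (x⁻¹ * z))) := by
    intro x y z
    rw [← hA z, ← h24 y x z (z⁻¹ * z), hA]
  have h26 : ∀ x y : S, x * (x⁻¹ * (y * (y⁻¹ * x))) = y * (y⁻¹ * x) := by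
    intro x y
    rw [← h25 y x x, hA]
  have h27 : ∀ x y : S, x * (x⁻¹ * y) * (y⁻¹ * x) = y * (y⁻¹ * x) := by
    intro x y
    rw [← hK (x⁻¹ * y) (y⁻¹ * x) x, ← hK y (y⁻¹ * x) x⁻¹, ← h4 x x⁻¹ (y * (y⁻¹ * x)), h26, hA]
  have h28 : ∀ x y : S, x * (x⁻¹ * y) * y⁻¹ * x = y * y⁻¹ * x := by
    intro x y
    rw [← hK y⁻¹ x (x * (x⁻¹ * y)), ← h1 (x * (x⁻¹ * y)) (y⁻¹ * x), h27, h1, hK]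
  have h29 : ∀ x y z : S, x * y * (y⁻¹ * (z * (z⁻¹ * y))) = x * z * (z⁻¹ * y) := by
    intro x y z
    rw [← hK y (y⁻¹ * (z * (z⁻¹ * y))) x, h26, hK]
  have h30 : ∀ x y : S, ((x⁻¹ * x⁻¹⁻¹)⁻¹⁻¹ * (y * x)⁻¹)⁻¹ = (x⁻¹ * y⁻¹)⁻¹ * (x⁻¹ * x) := by
    intro x y
    rw [← h4 (y * x) x⁻¹ x, h1]
  have h31 : ∀ x y z u : S, x * (y * (z * u * ((z * u)⁻¹ * z))) * u = x * (y * z) * u := by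
    intro x y z u
    rw [← hK (y * (z * u * ((z * u)⁻¹ * z))) u x, h12, hK]
  have h32 : ∀ x y z : S, x * (y * z) * ((y * z)⁻¹ * y) * z = (y⁻¹ * x⁻¹)⁻¹ * z := by
    intro x y z
    rw [← h29 x y (y * z), h31, h1]
  have h33 : ∀ x y : S, x * y⁻¹ * (y * y⁻¹) * y = (y⁻¹⁻¹ * x⁻¹)⁻¹ * y := by
    intro x y
    rw [← hK y⁻¹ (y * y⁻¹) x, ← h32 x (y⁻¹ * (y * y⁻¹)) y, h14, h17, h32]
  have h34 : ∀ x y : S, ((x * y * (x * y)⁻¹)⁻¹⁻¹ * (x * y))⁻¹ = (x⁻¹ * x * y)⁻¹ * x⁻¹ := by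
    intro x y
    calc ((x * y * (x * y)⁻¹)⁻¹⁻¹ * (x * y))⁻¹
      _ = ((x * y * (x⁻¹ * x * y)⁻¹ * x⁻¹)⁻¹ * (x * y))⁻¹ := by rw [h9 (x * y) x y]
      _ = ((x * (x⁻¹ * x) * y * (x⁻¹ * x * y)⁻¹ * x⁻¹)⁻¹ * (x * y))⁻¹ := by rw [hA x]
      _ = ((((x⁻¹ * x * y)⁻¹ * x⁻¹)⁻¹ * (x⁻¹ * x * y)⁻¹ * x⁻¹)⁻¹ * (x * y))⁻¹ := by
          rw [hK (x⁻¹ * x) y x]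
      _ = (x⁻¹ * x * y)⁻¹ * x⁻¹ * (((x⁻¹ * x * y)⁻¹ * x⁻¹)⁻¹ * (x⁻¹ * x * y)⁻¹) * x⁻¹ := by
          rw [h23 x y (((x⁻¹ * x * y)⁻¹ * x⁻¹)⁻¹ * (x⁻¹ * x * y)⁻¹) x⁻¹]
      _ = (x⁻¹ * x * y)⁻¹ * x⁻¹ := by rw [h6 ((x⁻¹ * x * y)⁻¹) x⁻¹]
  have h35 : ∀ x y z u : S, x * (y * (x⁻¹ * x * z)⁻¹)⁻¹ * u⁻¹ = (x * z * (u * y)⁻¹)⁻¹⁻¹ := by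
    intro x y z u
    rw [← h2 u y ((x⁻¹ * x * z)⁻¹) x, h9]
  have h36 : ∀ x y z : S, x * (y * (x⁻¹ * x⁻¹⁻¹)⁻¹⁻¹)⁻¹ * z⁻¹ = (x * (z * y)⁻¹)⁻¹⁻¹ := by
    intro x y z
    rw [← h1 x⁻¹ x, h35, hA]
  have h37 : ∀ x y z : S, x * (y * z⁻¹) * (z⁻¹ * (z * z⁻¹))⁻¹ = x * (y * z⁻¹) * z⁻¹⁻¹ := by
    intro x y z
    rw [← hK (y * z⁻¹) ((z⁻¹ * (z * z⁻¹))⁻¹) x, h18, hK]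
  have h38 : ∀ x y z u : S, x * (y * z) * (z⁻¹ * (u * (u⁻¹ * z))) = x * (y * u) * (u⁻¹ * z) := by
    intro x y z u
    rw [← hK (y * z) (z⁻¹ * (u * (u⁻¹ * z))) x, h29, hK]
  have h39 : ∀ x y : S, (x⁻¹ * (y * x⁻¹ * (x * x⁻¹))⁻¹)⁻¹ = (x⁻¹ * (x⁻¹⁻¹ * y⁻¹)⁻¹⁻¹)⁻¹ := by
    intro x y
    rw [← h1 (y * x⁻¹ * (x * x⁻¹)) x, h33, h1]
  have h40 : ∀ x y : S, x * (y⁻¹ * y⁻¹⁻¹)⁻¹⁻¹ * y⁻¹ = (y * x⁻¹)⁻¹ := by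
    intro x y
    rw [← hK ((y⁻¹ * y⁻¹⁻¹)⁻¹⁻¹) y⁻¹ x, h7, h8]
  have h41 : ∀ x y z : S, x * y * z * ((y * z)⁻¹ * (y * z)) = (y⁻¹ * x⁻¹)⁻¹ * z := by
    intro x y z
    rw [← hK y z x, ← h30 (y * z) x, hK, hK, h32]
  have h42 : ∀ x y z : S, ((x * y)⁻¹ * z)⁻¹ * ((x * y)⁻¹ * (x * y)) = (x⁻¹ * z)⁻¹ * y := by
    intro x y z
    rw [← h11 z x y, h41, h8]
  have h43 : ∀ x y : S, (x⁻¹⁻¹ * y)⁻¹ * (x⁻¹ * (x * x⁻¹))⁻¹ = (x⁻¹⁻¹ * y)⁻¹ * x⁻¹⁻¹ := by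
    intro x y
    rw [← h42 x⁻¹ ((x⁻¹ * (x * x⁻¹))⁻¹) y, h22, h42]
  have h44 : ∀ x y : S, x⁻¹ * (x * x⁻¹) * x⁻¹⁻¹ * y = x⁻¹ * x⁻¹⁻¹ * y := by
    intro x y
    rw [← hK x⁻¹⁻¹ y (x⁻¹ * (x * x⁻¹)), h43, hK]
  have h45 : ∀ x y z : S, x * (y⁻¹ * (y * y⁻¹) * y⁻¹⁻¹) * z = x * (y⁻¹ * y⁻¹⁻¹) * z := by
    intro x y z
    rw [← hK (y⁻¹ * (y * y⁻¹) * y⁻¹⁻¹) z x, h44, hK]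
  have h46 : ∀ x y : S, (x⁻¹ * (x * x⁻¹) * (y * x⁻¹)⁻¹)⁻¹⁻¹ = (x⁻¹ * (y * x⁻¹)⁻¹)⁻¹⁻¹ := by
    intro x y
    rw [← h35 x⁻¹ x⁻¹ (x * x⁻¹) y, h39, h36]
  have h47 : ∀ x y z : S, (x⁻¹ * (x * x⁻¹) * (x * y * z))⁻¹⁻¹ = (x⁻¹ * (x * y * z))⁻¹⁻¹ := by
    intro x y z
    rw [← hK y z x, h46, hK]
  have h48 : ∀ x y : S, (x⁻¹ * (x * x⁻¹) * (x * y))⁻¹⁻¹ = (x⁻¹ * (x * y))⁻¹⁻¹ := by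
    intro x y
    rw [← hA (x * y), h47, hA]
  have h49 : ∀ x y z : S, x * (y⁻¹ * (y * y⁻¹)) * (y * z) = x * y⁻¹ * (y * z) := by
    intro x y z
    rw [← hK (y⁻¹ * (y * y⁻¹)) (y * z) x, ← h40 x ((y⁻¹ * (y * y⁻¹) * (y * z))⁻¹), h48, h40, hK]
  have h50 : ∀ x y z : S, x⁻¹ * (x * x⁻¹) * (y * x⁻¹)⁻¹ * z⁻¹ = x⁻¹ * (y * x⁻¹)⁻¹ * z⁻¹ := by
    intro x y z
    rw [← h2 z y x⁻¹ (x⁻¹ * (x * x⁻¹)), h18, h2]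
  have h51 : ∀ x y z : S, x⁻¹ * (x * x⁻¹) * (y * x⁻¹)⁻¹ * z = x⁻¹ * (y * x⁻¹)⁻¹ * z := by
    intro x y z
    rw [← h8 z, h50, h8]
  have h52 : ∀ x y z u : S, x⁻¹ * (x * x⁻¹) * (x * y * z) * u = x⁻¹ * (x * y * z) * u := by
    intro x y z u
    rw [← hK y z x, h51, hK]
  have h53 : ∀ x y z : S, x⁻¹ * (x * x⁻¹) * (x * y) * z = x⁻¹ * (x * y) * z := by
    intro x y z
    rw [← hA (x * y), h52, hA]
  have h54 : ∀ x y z : S, (x * (y⁻¹ * (y * y⁻¹) * (y * z))⁻¹)⁻¹ = (x * (y⁻¹ * (y * z))⁻¹)⁻¹ := by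
    intro x y z
    rw [← h40 (y⁻¹ * (y * y⁻¹) * (y * z)) x, h53, h40]
  have h55 : ∀ x y : S, (x⁻¹ * (x * x⁻¹) * (x * y))⁻¹ = (x⁻¹ * (x * y))⁻¹ := by
    intro x y
    rw [← h8 ((x⁻¹ * (x * x⁻¹) * (x * y))⁻¹), h54, h48, hK, h49, hK, h6]
  have h56 : ∀ x : S, x⁻¹⁻¹ * x⁻¹ * ((x⁻¹⁻¹ * x⁻¹)⁻¹ * (x * x⁻¹)) = x * x⁻¹ := by
    intro x
    calc x⁻¹⁻¹ * x⁻¹ * ((x⁻¹⁻¹ * x⁻¹)⁻¹ * (x * x⁻¹))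
      _ = x⁻¹⁻¹ * x⁻¹ * ((x⁻¹⁻¹ * x⁻¹)⁻¹ * (x * (x⁻¹ * (x⁻¹⁻¹ * x⁻¹)))) := by rw [hA x⁻¹]
      _ = x * (x⁻¹ * (x⁻¹⁻¹ * x⁻¹)) := by rw [h26 (x⁻¹⁻¹ * x⁻¹) x]
      _ = x * x⁻¹ := by rw [hA x⁻¹]
  have h57 : ∀ x y : S, x * (x⁻¹ * ((y * y⁻¹)⁻¹⁻¹ * y)⁻¹) * y * x = ((y * x)⁻¹ * y)⁻¹ := by
    intro x y
    calc x * (x⁻¹ * ((y * y⁻¹)⁻¹⁻¹ * y)⁻¹) * y * x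
      _ = x * (x⁻¹ * ((y * y⁻¹)⁻¹⁻¹ * y)⁻¹) * ((y * y⁻¹)⁻¹⁻¹ * y)⁻¹⁻¹ * x := by rw [h8 y]
      _ = ((y * y⁻¹)⁻¹⁻¹ * y)⁻¹ * ((y * y⁻¹)⁻¹⁻¹ * y)⁻¹⁻¹ * x := by
          rw [h28 x (((y * y⁻¹)⁻¹⁻¹ * y)⁻¹)]
      _ = ((y * y⁻¹)⁻¹⁻¹ * y)⁻¹ * y * x := by rw [h8 y]
      _ = ((y * x)⁻¹ * y)⁻¹ := by rw [h11 y y x]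
  have h58 : ∀ x y : S, ((x * y)⁻¹ * (x * y) * (y⁻¹ * y))⁻¹ * (x * y)⁻¹ = y⁻¹ * x⁻¹ := by
    intro x y
    calc ((x * y)⁻¹ * (x * y) * (y⁻¹ * y))⁻¹ * (x * y)⁻¹
      _ = ((x * y * (y⁻¹ * y) * (x * y * (y⁻¹ * y))⁻¹)⁻¹⁻¹ * (x * y * (y⁻¹ * y)))⁻¹ := by
          rw [h34 (x * y) (y⁻¹ * y)]
      _ = (((y⁻¹ * x⁻¹)⁻¹ * (x * y * (y⁻¹ * y))⁻¹)⁻¹⁻¹ * (x * y * (y⁻¹ * y)))⁻¹ := by rw [h1 x y]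
      _ = (((y⁻¹ * x⁻¹)⁻¹ * (y⁻¹ * x⁻¹)⁻¹⁻¹)⁻¹⁻¹ * (x * y * (y⁻¹ * y)))⁻¹ := by rw [h1 x y]
      _ = (((y⁻¹ * x⁻¹)⁻¹ * y⁻¹ * x⁻¹)⁻¹ * (x * y * (y⁻¹ * y)))⁻¹ := by
          rw [hK y⁻¹ x⁻¹ ((y⁻¹ * x⁻¹)⁻¹)]
      _ = (((y⁻¹ * x⁻¹)⁻¹ * y⁻¹ * x⁻¹)⁻¹ * (y⁻¹ * x⁻¹)⁻¹)⁻¹ := by rw [h1 x y]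
      _ = y⁻¹ * x⁻¹ * ((y⁻¹ * x⁻¹)⁻¹ * y⁻¹) * x⁻¹ := by
          rw [hK ((y⁻¹ * x⁻¹)⁻¹ * y⁻¹) x⁻¹ (y⁻¹ * x⁻¹)]
      _ = y⁻¹ * x⁻¹ := by rw [h6 y⁻¹ x⁻¹]
  have h59 : ∀ x y : S, x⁻¹ * (y * (x⁻¹ * (x * x⁻¹)))⁻¹ = x⁻¹ * (y * x⁻¹)⁻¹ := by
    intro x y
    rw [← h58 (y * (x⁻¹ * (x * x⁻¹))) x, h15, h58]
  have h60 : ∀ x y : S, x⁻¹ * (y * x⁻¹ * (x * x⁻¹))⁻¹ = x⁻¹ * (x⁻¹⁻¹ * y⁻¹)⁻¹⁻¹ := by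
    intro x y
    rw [← h58 (y * x⁻¹ * (x * x⁻¹)) x, h33, h58]
  have h61 : ∀ x : S, (x⁻¹ * (x * x⁻¹) * x⁻¹⁻¹)⁻¹ = (x⁻¹ * x⁻¹⁻¹)⁻¹ := by
    intro x
    rw [← h9 x⁻¹ x⁻¹ (x * x⁻¹), h60, h40]
  have h62 : ∀ x : S, ((x⁻¹ * x)⁻¹ * (x⁻¹ * (x * x⁻¹)))⁻¹ = x * x⁻¹ * x := by
    intro x
    rw [← h14 x, ← h57 x (x⁻¹ * (x * x⁻¹)), h59, h37, h61, h5, hA, h15]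
  have h63 : ∀ x y : S, x * (y⁻¹ * y)⁻¹ * (y⁻¹ * (y * y⁻¹)) = x * (y⁻¹ * y)⁻¹ * y⁻¹ := by
    intro x y
    rw [← hK ((y⁻¹ * y)⁻¹) (y⁻¹ * (y * y⁻¹)) x, h62, h2]
  have h64 : ∀ x : S, x⁻¹ * x⁻¹⁻¹ * (x⁻¹ * (x * x⁻¹)) = x⁻¹ * x⁻¹⁻¹ * x⁻¹ := by
    intro x
    rw [← h58 x⁻¹ x, h63, h58]
  have h65 : ∀ x y z : S, x * (x⁻¹ * y) * (y⁻¹ * z) * (z⁻¹ * x) = y * (y⁻¹ * z) * (z⁻¹ * x) := by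
    intro x y z
    rw [← h38 (x * (x⁻¹ * y)) y⁻¹ x z, h27, h38]
  have h66 : ∀ x y : S, ((x⁻¹ * y⁻¹⁻¹)⁻¹⁻¹ * y⁻¹)⁻¹ * (x⁻¹ * y) = x * (x⁻¹ * y) := by
    intro x y
    rw [← h4 y y⁻¹ x, h65, hA]
  have h67 : ∀ x y : S, x * (y⁻¹ * y⁻¹⁻¹) * (y⁻¹ * (y * y⁻¹)) = x * (y⁻¹ * y⁻¹⁻¹) * y⁻¹ := by
    intro x y
    rw [← hK (y⁻¹ * y⁻¹⁻¹) (y⁻¹ * (y * y⁻¹)) x, h64, hK]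
  have h68 : ∀ x : S, (x⁻¹⁻¹ * (x⁻¹ * (x * x⁻¹)))⁻¹ = (x⁻¹⁻¹ * x⁻¹)⁻¹ := by
    intro x
    rw [← h55 x⁻¹ (x * x⁻¹), h67, h14]
  have h69 : ∀ x y : S, x⁻¹⁻¹ * (x⁻¹ * (x * x⁻¹)) * y = x⁻¹⁻¹ * x⁻¹ * y := by
    intro x y
    rw [← h53 x⁻¹ (x * x⁻¹) y, h67, h14]
  have h70 : ∀ x : S, x⁻¹⁻¹ * x⁻¹ = x * x⁻¹ := by
    intro x
    rw [← h14 x⁻¹, ← h67 x⁻¹⁻¹ x, ← h45 x⁻¹⁻¹ x (x⁻¹ * (x * x⁻¹)), ← h37 x⁻¹ x x,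
      ← h13 x⁻¹⁻¹ (x⁻¹ * (x * x⁻¹)), h69, h42, h68, h56]
  have h71 : ∀ x : S, x⁻¹ * (x * x⁻¹) = x⁻¹ := by
    intro x
    rw [← h70 x, hA]
  have h72 : ∀ x y : S, x * y⁻¹⁻¹ * y⁻¹ = x * y * y⁻¹ := by
    intro x y
    rw [← hK y⁻¹⁻¹ y⁻¹ x, h70, hK]
  have h73 : ∀ x y : S, x * y⁻¹ * (y * y⁻¹) = (y⁻¹⁻¹ * x⁻¹)⁻¹ := by
    intro x y
    rw [← h70 y, h1]
  have h74 : ∀ x : S, (x⁻¹⁻¹ * x⁻¹⁻¹⁻¹)⁻¹ = (x * x⁻¹)⁻¹ := by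
    intro x
    rw [← h73 x⁻¹⁻¹ x, h70, h73, h70]
  have h75 : ∀ x : S, (x * x⁻¹)⁻¹⁻¹ * x⁻¹⁻¹ = x := by
    intro x
    rw [← h74 x, h7, h7, h8]
  have h76 : ∀ x : S, (x * x⁻¹)⁻¹⁻¹ * x⁻¹⁻¹⁻¹⁻¹ = x⁻¹⁻¹ := by
    intro x
    rw [← h74 x, h75]
  have h77 : ∀ x : S, x⁻¹⁻¹ * x⁻¹⁻¹⁻¹ = x * x⁻¹⁻¹⁻¹ := by
    intro x
    calc x⁻¹⁻¹ * x⁻¹⁻¹⁻¹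
      _ = (x * x⁻¹)⁻¹⁻¹ * x⁻¹⁻¹⁻¹⁻¹ * x⁻¹⁻¹⁻¹ := by rw [h76 x]
      _ = (x * x⁻¹)⁻¹⁻¹ * x⁻¹⁻¹ * x⁻¹⁻¹⁻¹ := by rw [h72 ((x * x⁻¹)⁻¹⁻¹) x⁻¹⁻¹]
      _ = x * x⁻¹⁻¹⁻¹ := by rw [h75 x]
  have h78 : ∀ x : S, (x * x⁻¹⁻¹⁻¹)⁻¹ = (x * x⁻¹)⁻¹ := by
    intro x
    rw [← h77 x, h74]
  have h79 : ∀ x : S, x * (x⁻¹ * x⁻¹⁻¹) = x⁻¹⁻¹ := by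
    intro x
    rw [← h66 x x⁻¹⁻¹, h78, h75, h71]
  intro x
  calc x⁻¹⁻¹
    _ = x⁻¹⁻¹ * (x⁻¹ * x⁻¹⁻¹) := by rw [h71 x⁻¹]
    _ = x⁻¹⁻¹ * (x⁻¹⁻¹⁻¹ * x⁻¹⁻¹) := by rw [h70 x⁻¹]
    _ = x * (x⁻¹ * x⁻¹⁻¹) * (x⁻¹⁻¹⁻¹ * x⁻¹⁻¹) := by rw [h79 x]
    _ = ((x⁻¹⁻¹⁻¹ * x⁻¹⁻¹)⁻¹⁻¹ * x⁻¹)⁻¹ := by rw [h4 x x⁻¹ x⁻¹⁻¹]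
    _ = ((x⁻¹ * x⁻¹⁻¹)⁻¹⁻¹ * x⁻¹)⁻¹ := by rw [h70 x⁻¹]
    _ = ((x * x⁻¹)⁻¹⁻¹ * x)⁻¹⁻¹ := by rw [h7 x]
    _ = x := by rw [h8 x]

theorem two_base_implies_involution {S : Type*} (m : S → S → S) (i : S → S)
    (hA : ∀ x, m x (m (i x) x) = x)
    (hB : ∀ x y z u w,
      m x (m (i x) (m y (m (i y) (i (m (i (m z u)) (i w)))))) =
      m y (m (i y) (m x (m (i x) (m (m w z) u))))) :
    ∀ x, i (i x) = x := by
  let _ : Mul S := ⟨m⟩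
  let _ : Inv S := ⟨i⟩
  exact inv_inv_of_two_base (S := S) hA hB
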